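/- Let J be a nilpotent Jordan superalgebra over ℂ of type (1,4). Then J is isomorphic, via a grading-preserving algebra isomorphism, to exactly one of the following nine superalgebras, each given on a homogeneous basis {e₁; f₁, f₂, f₃, f₄} (e₁ even, f_i odd): (1) all products zero; (2) f₁f₂ = e₁; (3) f₁f₂ = e₁, f₃f₄ = e₁; (4) e₁f₂ = f₁; (5) e₁f₂ = f₁, f₂f₃ = e₁; (6) e₁f₂ = f₁, f₃f₄ = e₁; (7) e₁f₂ = f₁, e₁f₃ = f₂; (8) e₁f₂ = f₁, e₁f₄ = f₃; (9) e₁f₂ = f₁, e₁f₄ = f₃, f₂f₄ = e₁. In particular these nine superalgebras are pairwise non-isomorphic. -/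

import Mathlib

noncomputable section

/-- The underlying ℤ/2-graded vector space of type `(m,n)`: even part `Fin m → ℂ`,
odd part `Fin n → ℂ`. -/
abbrev GV (m n : ℕ) : Type := (Fin m → ℂ) × (Fin n → ℂ)

/-- A superalgebra structure tensor of type `(m,n)`: structure constants
`c i j k` (even·even), `ρ i j k` (even·odd) and `Γ i j k` (odd·odd). -/
abbrev Tensor (m n : ℕ) : Type :=
  (Fin m → Fin m → Fin m → ℂ) × (Fin m → Fin n → Fin n → ℂ) × (Fin n → Fin n → Fin m → ℂ)

/-- The ℤ/2-graded multiplication on `GV m n` determined by a structure tensor. -/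
def mulOf {m n : ℕ} (μ : Tensor m n) (x y : GV m n) : GV m n :=
  (fun k => (∑ i, ∑ j, x.1 i * y.1 j * μ.1 i j k) + ∑ i, ∑ j, x.2 i * y.2 j * μ.2.2 i j k,
   fun k => (∑ i, ∑ j, x.1 i * y.2 j * μ.2.1 i j k) + ∑ i, ∑ j, y.1 i * x.2 j * μ.2.1 i j k)

/-- `x` is homogeneous of parity `p` (`p = 0`: even, `p = 1`: odd). -/
def IsHom {m n : ℕ} (p : ℕ) (x : GV m n) : Prop :=
  (p = 0 ∧ x.2 = 0) ∨ (p = 1 ∧ x.1 = 0)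

/-- The sign `(-1)^k`. -/
def sgn (k : ℕ) : ℂ := (-1 : ℂ) ^ k

/-- The super-Jordan expression `J^s(w; x, y, z)` for homogeneous elements of
parities `pw, px, py, pz`. -/
def superJ {m n : ℕ} (μ : Tensor m n) (pw px py pz : ℕ) (w x y z : GV m n) : GV m n :=
  mulOf μ (mulOf μ w x) (mulOf μ y z)
    + sgn (px * py) • mulOf μ (mulOf μ w y) (mulOf μ x z)
    + sgn ((px + py) * pz) • mulOf μ (mulOf μ w z) (mulOf μ x y)
    - sgn (pw * px) • mulOf μ x (mulOf μ w (mulOf μ y z))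
    - sgn (py * (pw + px)) • mulOf μ y (mulOf μ w (mulOf μ x z))
    - sgn (pz * (pw + px + py)) • mulOf μ z (mulOf μ w (mulOf μ x y))

/-- `μ` is a Jordan superalgebra structure: supercommutativity and the Jordan
superidentity hold for all homogeneous elements. -/
def IsJordanSuper {m n : ℕ} (μ : Tensor m n) : Prop :=
  (∀ (px py : ℕ) (x y : GV m n), IsHom px x → IsHom py y →
      mulOf μ x y = sgn (px * py) • mulOf μ y x) ∧
  (∀ (pw px py pz : ℕ) (w x y z : GV m n),
      IsHom pw w → IsHom px x → IsHom py y → IsHom pz z →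
      superJ μ pw px py pz w x y z = 0)

/-- The product of two graded subspaces: the span of all products. -/
def mulSub {m n : ℕ} (μ : Tensor m n) (A B : Submodule ℂ (GV m n)) : Submodule ℂ (GV m n) :=
  Submodule.span ℂ {z | ∃ a ∈ A, ∃ b ∈ B, z = mulOf μ a b}

/-- The powers `J^k`: `J^1 = J` and `J^{k+1} = Σ_{i=1}^{k} J^i · J^{k+1-i}`. -/
def powT {m n : ℕ} (μ : Tensor m n) : ℕ → Submodule ℂ (GV m n)
  | 0 => ⊤
  | 1 => ⊤
  | (k + 2) => ⨆ i : Fin (k + 1), mulSub μ (powT μ ((i : ℕ) + 1)) (powT μ (k + 1 - (i : ℕ)))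
  decreasing_by
  · have := i.isLt; omega
  · omega

/-- `μ` is nilpotent: some power vanishes. -/
def IsNilpotentT {m n : ℕ} (μ : Tensor m n) : Prop :=
  ∃ k : ℕ, 1 ≤ k ∧ powT μ k = ⊥

/-- A grading-preserving algebra isomorphism between the superalgebras determined
by `μ` and `μ'`. -/
def Iso {m n : ℕ} (μ μ' : Tensor m n) : Prop :=
  ∃ (T : (Fin m → ℂ) ≃ₗ[ℂ] (Fin m → ℂ)) (S : (Fin n → ℂ) ≃ₗ[ℂ] (Fin n → ℂ)),
    ∀ x y : GV m n,
      (T ((mulOf μ x y).1), S ((mulOf μ x y).2)) = mulOf μ' (T x.1, S x.2) (T y.1, S y.2)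

/-- `μ` degenerates to `μ'`: `μ'` lies in the closure of the orbit of `μ` under
base change (in the standard topology). -/
def degenerates {m n : ℕ} (μ μ' : Tensor m n) : Prop :=
  μ' ∈ closure {ν : Tensor m n | Iso μ ν}

/-- Standard even basis vector `e_i`. -/
def eps {m n : ℕ} (i : Fin m) : GV m n := (Pi.single i 1, 0)

/-- Standard odd basis vector `f_j`. -/
def ph {m n : ℕ} (j : Fin n) : GV m n := (0, Pi.single j 1)


/-- A tensor of type (1,4) from the matrices of structure constants:
`R j k` is the coefficient of `f_k` in `e₁·f_j`; `W i j` is the coefficient of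
`e₁` in `f_i·f_j`. -/
def T14 (R W : Fin 4 → Fin 4 → ℂ) : Tensor 1 4 :=
  (fun _ _ _ => 0, fun _ => R, fun i j _ => W i j)

/-- The nine nilpotent Jordan superalgebras of type (1,4) from Table 3. -/
def A14 : Fin 9 → Tensor 1 4 :=
  ![ T14 0 0,                                                                    -- (1,4)₁
     T14 0 ![![0,1,0,0], ![-1,0,0,0], ![0,0,0,0], ![0,0,0,0]],                   -- (1,4)₂
     T14 0 ![![0,1,0,0], ![-1,0,0,0], ![0,0,0,1], ![0,0,-1,0]],                  -- (1,4)₃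
     T14 ![![0,0,0,0], ![1,0,0,0], ![0,0,0,0], ![0,0,0,0]] 0,                    -- (1,4)₄
     T14 ![![0,0,0,0], ![1,0,0,0], ![0,0,0,0], ![0,0,0,0]]
         ![![0,0,0,0], ![0,0,1,0], ![0,-1,0,0], ![0,0,0,0]],                     -- (1,4)₅
     T14 ![![0,0,0,0], ![1,0,0,0], ![0,0,0,0], ![0,0,0,0]]
         ![![0,0,0,0], ![0,0,0,0], ![0,0,0,1], ![0,0,-1,0]],                     -- (1,4)₆
     T14 ![![0,0,0,0], ![1,0,0,0], ![0,1,0,0], ![0,0,0,0]] 0,                    -- (1,4)₇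
     T14 ![![0,0,0,0], ![1,0,0,0], ![0,0,0,0], ![0,0,1,0]] 0,                    -- (1,4)₈
     T14 ![![0,0,0,0], ![1,0,0,0], ![0,0,0,0], ![0,0,1,0]]
         ![![0,0,0,0], ![0,0,0,1], ![0,0,0,0], ![0,-1,0,0]] ]                    -- (1,4)₉

/-! Nilpotency forces `e₁² = 0` and `f (e₁ g) = 0` for odd `f`, `g`: otherwise `e₁` would be fixed
by a multiple of a product of left multiplications. A superalgebra of type `(1, n)` is then
determined by the operator `L f = e₁ f` and the form `ω` with `f g = ω(f, g) e₁` on the odd part.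
The Jordan axioms make `ω` alternating and give `L³ = 0` and `ω(h, f) L² g = ω(h, g) L² f`.

For `n = 4`, if `L² ≠ 0` then the last relation forces `ω = 0`, and `L` has Jordan blocks of sizes
`3` and `1`. If `L² = 0`, then `L` has rank `0`, `1` or `2`; in rank `0` and `2` the pair `(L, ω)`
is determined by the rank of `ω`, and in rank `1` by whether `ω` vanishes and whether it vanishes
on `ker L`. Conversely, an isomorphism carries `ker L`, `range L` and the radical of `ω` to one
another, and the inclusions between these three subspaces tell the nine algebras apart. -/

open Module Submodule
open LinearMap (BilinForm)

section LinearAlgebra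

variable {K V : Type*} [Field K] [AddCommGroup V] [Module K V]

lemma exists_mem_linearIndependent_snoc {n : ℕ} {v : Fin n → V} (hv : LinearIndependent K v)
    (hn : n < finrank K V) {N : Submodule K V} (hN : Codisjoint (span K (Set.range v)) N) :
    ∃ x ∈ N, LinearIndependent K (Fin.snoc v x : Fin (n + 1) → V) := by
  by_contra! h
  have hle : N ≤ span K (Set.range v) := fun x hx => by
    by_contra hxv
    exact h x hx (linearIndependent_finSnoc.2 ⟨hv, hxv⟩)
  have htop : span K (Set.range v) = ⊤ := by
    rw [← sup_eq_left.2 hle, hN.eq_top]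
  have := finrank_span_eq_card hv
  rw [htop, finrank_top, Fintype.card_fin] at this
  exact hn.ne' this

lemma codisjoint_span_singleton_ker {T : End K V} {x : V}
    (h : LinearMap.range T ≤ span K {T x}) : Codisjoint (span K {x}) (LinearMap.ker T) := by
  refine codisjoint_iff_exists_add_eq.2 fun y => ?_
  obtain ⟨c, hc⟩ := mem_span_singleton.1 (h ⟨y, rfl⟩)
  exact ⟨c • x, y - c • x, smul_mem _ c (mem_span_singleton_self x), by simp [hc],
    add_sub_cancel _ _⟩

lemma range_le_of_isNilpotent_of_finrank_le [FiniteDimensional K V] {T : End K V}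
    (hT : IsNilpotent T) {W : Submodule K V} (hTW : W ∈ End.invtSubmodule T)
    (hW : finrank K V ≤ finrank K W + 1) : LinearMap.range T ≤ W := by
  rintro _ ⟨x, rfl⟩
  by_contra hx
  have htop : W ⊔ span K {T x} = ⊤ := by
    have hlt : W < W ⊔ span K {T x} :=
      lt_of_le_of_ne le_sup_left fun h => hx (h ▸ mem_sup_right (mem_span_singleton_self _))
    refine eq_top_of_finrank_eq (le_antisymm (finrank_le _) ?_)
    have := finrank_lt_finrank_of_lt hlt
    omega
  obtain ⟨w, hw, z, hz, hwz⟩ := mem_sup.1 (htop ▸ mem_top : x ∈ W ⊔ span K {T x})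
  obtain ⟨c, rfl⟩ := mem_span_singleton.1 hz
  have hpow : ∀ (k : ℕ) {v : V}, v ∈ W → (T ^ k) v ∈ W := fun k v hv => by
    induction k with
    | zero => exact hv
    | succ k ih => rw [pow_succ']; exact hTW ih
  -- Modulo `W`, `x` is a multiple of `T x`, so `T` cannot act nilpotently on it.
  have hdescend : ∀ k : ℕ, (T ^ (k + 1)) x ∉ W := fun k => by
    induction k with
    | zero => simpa using hx
    | succ k ih =>
      intro hk
      apply ih
      rw [← hwz, map_add, map_smul, ← Module.End.mul_apply, ← pow_succ]
      exact W.add_mem (hpow _ hw) (W.smul_mem c hk)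
  obtain ⟨k, hk⟩ := hT
  exact hdescend k (by simp [pow_succ', hk])

lemma linearIndependent_triple_of_pow_three_eq_zero {T : End K V} (hT : T ^ 3 = 0) {g : V}
    (hg : T (T g) ≠ 0) : LinearIndependent K ![T (T g), T g, g] := by
  have hcube : ∀ x, T (T (T x)) = 0 := fun x => by simpa [pow_succ] using congr($hT x)
  refine Fintype.linearIndependent_iff.2 fun c hc => ?_
  have hc : c 0 • T (T g) + c 1 • T g + c 2 • g = 0 := by simpa [Fin.sum_univ_three] using hc
  have h2 : c 2 = 0 := by simpa [hcube, hg] using congr(T (T $hc))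
  have h1 : c 1 = 0 := by simpa [hcube, hg, h2] using congr(T $hc)
  have h0 : c 0 = 0 := by simpa [hg, h1, h2] using hc
  exact Fin.forall_fin_succ.2 ⟨h0, Fin.forall_fin_two.2 ⟨h1, h2⟩⟩

lemma linearIndependent_pair_of_sq_eq_zero {T : End K V} (hT : T ^ 2 = 0) {x : V}
    (hx : T x ≠ 0) : LinearIndependent K ![T x, x] := by
  have hsq : ∀ x, T (T x) = 0 := fun x => by simpa [pow_succ] using congr($hT x)
  refine LinearIndependent.pair_iff.2 fun a b h => ?_
  have hb : b = 0 := by simpa [hsq, hx] using congr(T $h)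
  exact ⟨by simpa [hb, hx] using h, hb⟩

lemma codisjoint_span_triple_ker {T : End K V} (hT : T ^ 3 = 0) (hV : finrank K V = 4) {g : V}
    (hg : T (T g) ≠ 0) :
    Codisjoint (span K (Set.range ![T (T g), T g, g])) (LinearMap.ker T) := by
  have : FiniteDimensional K V := .of_finrank_pos (by omega)
  have hcube : ∀ x, T (T (T x)) = 0 := fun x => by simpa [pow_succ] using congr($hT x)
  set W := span K (Set.range ![T (T g), T g, g]) with hWdef
  have hW : finrank K W = 3 := by
    simpa using finrank_span_eq_card (linearIndependent_triple_of_pow_three_eq_zero hT hg)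
  have hTW : W ∈ End.invtSubmodule T := by
    have hmem : ∀ i, ![T (T g), T g, g] i ∈ W := fun i => subset_span ⟨i, rfl⟩
    rw [End.mem_invtSubmodule, hWdef, span_le, Set.range_subset_iff]
    intro i
    fin_cases i
    exacts [by simp [hcube], hmem 0, hmem 1]
  refine codisjoint_iff_exists_add_eq.2 fun u => ?_
  obtain ⟨c, hc⟩ := mem_span_range_iff_exists_fun K |>.1
    (range_le_of_isNilpotent_of_finrank_le ⟨3, hT⟩ hTW (by omega) ⟨u, rfl⟩)
  have hc : c 0 • T (T g) + c 1 • T g + c 2 • g = T u := by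
    simpa [Fin.sum_univ_three] using hc
  have h2 : c 2 = 0 := by simpa [hcube, hg] using congr(T (T $hc))
  refine ⟨c 0 • T g + c 1 • g, u - (c 0 • T g + c 1 • g), ?_, ?_, add_sub_cancel _ _⟩
  · exact W.add_mem (W.smul_mem _ (subset_span ⟨1, rfl⟩)) (W.smul_mem _ (subset_span ⟨2, rfl⟩))
  · simp [← hc, h2]

lemma linearIndependent_pair_of_apply_eq_one {ω : BilinForm K V} (hω : ω.IsAlt) {p q : V}
    (hpq : ω p q = 1) : LinearIndependent K ![p, q] := by
  refine LinearIndependent.pair_iff.2 fun a b h => ?_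
  have hb : b = 0 := by simpa [hω.self_eq_zero, hpq] using congr(ω p $h)
  have ha : a = 0 := by simpa [hω.self_eq_zero, hpq] using congr(ω $h q)
  exact ⟨ha, hb⟩

lemma codisjoint_span_pair_ker_inf_ker {ω : BilinForm K V} (hω : ω.IsAlt) {p q : V}
    (hpq : ω p q = 1) :
    Codisjoint (span K {p, q}) (LinearMap.ker (ω p) ⊓ LinearMap.ker (ω q)) := by
  have hqp : ω q p = -1 := by rw [← hω.neg_eq, hpq]
  refine codisjoint_iff_exists_add_eq.2 fun y =>
    ⟨ω p y • q - ω q y • p, y - (ω p y • q - ω q y • p), ?_, ?_, add_sub_cancel _ _⟩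
  · exact sub_mem (smul_mem _ _ (subset_span (by simp))) (smul_mem _ _ (subset_span (by simp)))
  · simp [hω.self_eq_zero, hpq, hqp]

lemma linearIndependent_of_sq_eq_zero {T : End K V} (hT : T ^ 2 = 0) {x y : V}
    (hxy : LinearIndependent K ![T x, T y]) : LinearIndependent K ![T x, x, T y, y] := by
  have hsq : ∀ x, T (T x) = 0 := fun x => by simpa [pow_succ] using congr($hT x)
  have hpair := LinearIndependent.pair_iff.1 hxy
  refine Fintype.linearIndependent_iff.2 fun c hc => ?_
  have hc : c 0 • T x + c 1 • x + c 2 • T y + c 3 • y = 0 := by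
    simpa [Fin.sum_univ_four] using hc
  obtain ⟨h1, h3⟩ := hpair (c 1) (c 3) (by simpa [hsq] using congr(T $hc))
  obtain ⟨h0, h2⟩ := hpair (c 0) (c 2) (by simpa [h1, h3] using hc)
  simp [Fin.forall_fin_succ, h0, h1, h2, h3]

end LinearAlgebra

/-- The pair of an endomorphism `L` and a bilinear form `ω` has, with respect to some basis, the
structure constants of `T14 R W`: row `j` of `R` lists the coordinates of `L (b j)`, and `W` is the
Gram matrix of `ω`. -/
def HasStructureConstants {ι K V : Type*} [Fintype ι] [Field K] [AddCommGroup V] [Module K V]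
    (L : End K V) (ω : BilinForm K V) (R W : ι → ι → K) : Prop :=
  ∃ b : Basis ι K V, (∀ j, L (b j) = ∑ k, R j k • b k) ∧ ∀ i j, ω (b i) (b j) = W i j

section NormalForms

variable {K V : Type*} [Field K] [AddCommGroup V] [Module K V] {L : End K V} {ω : BilinForm K V}

lemma HasStructureConstants.of_linearIndependent {ι : Type*} [Fintype ι] [Nonempty ι]
    {R W : ι → ι → K} {v : ι → V} (hv : LinearIndependent K v)
    (hV : finrank K V = Fintype.card ι) (hL : ∀ j, L (v j) = ∑ k, R j k • v k)
    (hW : ∀ i j, ω (v i) (v j) = W i j) : HasStructureConstants L ω R W :=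
  ⟨basisOfLinearIndependentOfCardEqFinrank hv hV.symm, by simpa using hL, by simpa using hW⟩

lemma hasStructureConstants_of_sq_ne_zero (hV : finrank K V = 4) (hω : ω.IsAlt)
    (hωL : ∀ x y, ω x (L y) = 0) (hL : L ^ 3 = 0)
    (hmix : ∀ x y z, ω x y • L (L z) = ω x z • L (L y)) {g : V} (hg : L (L g) ≠ 0) :
    HasStructureConstants L ω ![![0,0,0,0], ![1,0,0,0], ![0,1,0,0], ![0,0,0,0]] 0 := by
  have hcube : ∀ x, L (L (L x)) = 0 := fun x => by simpa [pow_succ] using congr($hL x)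
  obtain ⟨f, hf, hli⟩ := exists_mem_linearIndependent_snoc
    (linearIndependent_triple_of_pow_three_eq_zero hL hg) (by omega)
    (codisjoint_span_triple_ker hL hV hg)
  have hLf : L f = 0 := hf
  have hωf : ∀ x, ω x f = 0 := fun x => by simpa [hLf, hg] using hmix x f g
  have hLω : ∀ x y, ω (L x) y = 0 := fun _ _ => hω.isRefl.eq_zero (hωL _ _)
  have hfω : ∀ x, ω f x = 0 := fun _ => hω.isRefl.eq_zero (hωf _)
  refine .of_linearIndependent hli (by simpa using hV) ?_ ?_
  · simp [Fin.forall_fin_succ, Fin.sum_univ_four, hcube, hLf]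
  · simp [Fin.forall_fin_succ, hωL, hLω, hωf, hfω, hω.self_eq_zero]

lemma hasStructureConstants_of_linearIndependent_apply (hV : finrank K V = 4) (hω : ω.IsAlt)
    (hωL : ∀ x y, ω x (L y) = 0) (hL : L ^ 2 = 0) {x y : V}
    (hxy : LinearIndependent K ![L x, L y]) :
    HasStructureConstants L ω ![![0,0,0,0], ![1,0,0,0], ![0,0,0,0], ![0,0,1,0]] 0 ∨
    HasStructureConstants L ω ![![0,0,0,0], ![1,0,0,0], ![0,0,0,0], ![0,0,1,0]]
      ![![0,0,0,0], ![0,0,0,1], ![0,0,0,0], ![0,-1,0,0]] := by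
  have hsq : ∀ x, L (L x) = 0 := fun x => by simpa [pow_succ] using congr($hL x)
  have hLω : ∀ x y, ω (L x) y = 0 := fun _ _ => hω.isRefl.eq_zero (hωL _ _)
  by_cases h : ω x y = 0
  · left
    have hyx : ω y x = 0 := hω.isRefl.eq_zero h
    refine .of_linearIndependent (linearIndependent_of_sq_eq_zero hL hxy) (by simpa using hV) ?_ ?_
    · simp [Fin.forall_fin_succ, Fin.sum_univ_four, hsq]
    · simp [Fin.forall_fin_succ, hωL, hLω, h, hyx, hω.self_eq_zero]
  · right
    obtain ⟨z, hxz, hz⟩ : ∃ z, ω x z = 1 ∧ LinearIndependent K ![L x, L z] := by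
      refine ⟨(ω x y)⁻¹ • y, by simp [h], LinearIndependent.pair_iff.2 fun a b hab => ?_⟩
      simpa [h] using LinearIndependent.pair_iff.1 hxy a (b * (ω x y)⁻¹)
        (by simpa [mul_smul] using hab)
    have hzx : ω z x = -1 := by rw [← hω.neg_eq, hxz]
    refine .of_linearIndependent (linearIndependent_of_sq_eq_zero hL hz) (by simpa using hV) ?_ ?_
    · simp [Fin.forall_fin_succ, Fin.sum_univ_four, hsq]
    · simp [Fin.forall_fin_succ, hωL, hLω, hxz, hzx, hω.self_eq_zero]

lemma hasStructureConstants_of_range_le_of_eq_zero (hV : finrank K V = 4) (hL : L ^ 2 = 0) {x : V}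
    (hx : L x ≠ 0) (hrange : LinearMap.range L ≤ span K {L x}) :
    HasStructureConstants L (0 : BilinForm K V)
      ![![0,0,0,0], ![1,0,0,0], ![0,0,0,0], ![0,0,0,0]] 0 := by
  have hsq : ∀ x, L (L x) = 0 := fun x => by simpa [pow_succ] using congr($hL x)
  have hcod := codisjoint_span_singleton_ker hrange
  have hli := linearIndependent_pair_of_sq_eq_zero hL hx
  obtain ⟨u, hu, hli⟩ := exists_mem_linearIndependent_snoc hli (by omega)
    (hcod.mono_left (span_mono (by simp)))
  obtain ⟨v, hv, hli⟩ := exists_mem_linearIndependent_snoc hli (by omega)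
    (hcod.mono_left (span_mono (by simp)))
  have hLu : L u = 0 := hu
  have hLv : L v = 0 := hv
  refine .of_linearIndependent hli (by simpa using hV) ?_ ?_
  · simp [Fin.forall_fin_succ, Fin.sum_univ_four, hsq, hLu, hLv]
  · simp

lemma hasStructureConstants_of_ker_apply_eq_one (hV : finrank K V = 4) (hω : ω.IsAlt)
    (hωL : ∀ x y, ω x (L y) = 0) (hL : L ^ 2 = 0) {x p q : V} (hx : L x ≠ 0) (hp : L p = 0)
    (hq : L q = 0) (hpq : ω p q = 1) :
    HasStructureConstants L ω ![![0,0,0,0], ![1,0,0,0], ![0,0,0,0], ![0,0,0,0]]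
      ![![0,0,0,0], ![0,0,0,0], ![0,0,0,1], ![0,0,-1,0]] := by
  have hsq : ∀ x, L (L x) = 0 := fun x => by simpa [pow_succ] using congr($hL x)
  have hLω : ∀ x y, ω (L x) y = 0 := fun _ _ => hω.isRefl.eq_zero (hωL _ _)
  have hqp : ω q p = -1 := by rw [← hω.neg_eq, hpq]
  obtain ⟨z, hz, hpz, hqz⟩ : ∃ z, L z = L x ∧ ω p z = 0 ∧ ω q z = 0 :=
    ⟨x + ω q x • p - ω p x • q, by simp [hp, hq], by simp [hω.self_eq_zero, hpq],
      by simp [hω.self_eq_zero, hqp]⟩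
  have hzp : ω z p = 0 := hω.isRefl.eq_zero hpz
  have hzq : ω z q = 0 := hω.isRefl.eq_zero hqz
  have hli : LinearIndependent K ![L x, z, p, q] := by
    refine Fintype.linearIndependent_iff.2 fun c hc => ?_
    have hc : c 0 • L x + c 1 • z + c 2 • p + c 3 • q = 0 := by
      simpa [Fin.sum_univ_four] using hc
    have h1 : c 1 = 0 := by simpa [hsq, hp, hq, hz, hx] using congr(L $hc)
    have h2 : c 2 = 0 := by simpa [hωL, hqz, hqp, hω.self_eq_zero] using congr(ω q $hc)
    have h3 : c 3 = 0 := by simpa [hωL, hpz, hpq, hω.self_eq_zero] using congr(ω p $hc)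
    have h0 : c 0 = 0 := by simpa [h1, h2, h3, hx] using hc
    simp [Fin.forall_fin_succ, h0, h1, h2, h3]
  refine .of_linearIndependent hli (by simpa using hV) ?_ ?_
  · simp [Fin.forall_fin_succ, Fin.sum_univ_four, hsq, hz, hp, hq]
  · simp [Fin.forall_fin_succ, hωL, hLω, hzp, hzq, hpz, hqz, hpq, hqp, hω.self_eq_zero]

lemma hasStructureConstants_of_ker_isotropic (hV : finrank K V = 4) (hω : ω.IsAlt)
    (hωL : ∀ x y, ω x (L y) = 0) (hL : L ^ 2 = 0) {x p : V} (hx : L x ≠ 0)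
    (hrange : LinearMap.range L ≤ span K {L x})
    (hker : ∀ y z, L y = 0 → L z = 0 → ω y z = 0) (hp : L p = 0) (hxp : ω x p = 1) :
    HasStructureConstants L ω ![![0,0,0,0], ![1,0,0,0], ![0,0,0,0], ![0,0,0,0]]
      ![![0,0,0,0], ![0,0,1,0], ![0,-1,0,0], ![0,0,0,0]] := by
  have hsq : ∀ x, L (L x) = 0 := fun x => by simpa [pow_succ] using congr($hL x)
  have hLω : ∀ x y, ω (L x) y = 0 := fun _ _ => hω.isRefl.eq_zero (hωL _ _)
  have hpx : ω p x = -1 := by rw [← hω.neg_eq, hxp]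
  have hli : LinearIndependent K ![L x, x, p] := by
    refine Fintype.linearIndependent_iff.2 fun c hc => ?_
    have hc : c 0 • L x + c 1 • x + c 2 • p = 0 := by simpa [Fin.sum_univ_three] using hc
    have h1 : c 1 = 0 := by simpa [hsq, hp, hx] using congr(L $hc)
    have h2 : c 2 = 0 := by simpa [hωL, hxp, hω.self_eq_zero] using congr(ω x $hc)
    have h0 : c 0 = 0 := by simpa [h1, h2, hx] using hc
    simp [Fin.forall_fin_succ, h0, h1, h2]
  have hcod : Codisjoint (span K (Set.range ![L x, x, p]))
      (LinearMap.ker L ⊓ LinearMap.ker (ω x)) := by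
    refine codisjoint_iff_exists_add_eq.2 fun y => ?_
    obtain ⟨c, hc⟩ := mem_span_singleton.1 (hrange ⟨y, rfl⟩)
    refine ⟨c • x + ω x y • p, y - (c • x + ω x y • p), ?_, ?_, add_sub_cancel _ _⟩
    · exact add_mem (smul_mem _ _ (subset_span ⟨1, rfl⟩)) (smul_mem _ _ (subset_span ⟨2, rfl⟩))
    · simp [hc, hp, hxp, hω.self_eq_zero]
  obtain ⟨u, ⟨hu, hxu⟩, hli⟩ := exists_mem_linearIndependent_snoc hli (by omega) hcod
  have hLu : L u = 0 := hu
  have hxu : ω x u = 0 := hxu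
  have hux : ω u x = 0 := hω.isRefl.eq_zero hxu
  refine .of_linearIndependent hli (by simpa using hV) ?_ ?_
  · simp [Fin.forall_fin_succ, Fin.sum_univ_four, hsq, hp, hLu]
  · simp [Fin.forall_fin_succ, hωL, hLω, hxp, hpx, hxu, hux, hker, hp, hLu, hω.self_eq_zero]

lemma hasStructureConstants_of_range_le (hV : finrank K V = 4) (hω : ω.IsAlt)
    (hωL : ∀ x y, ω x (L y) = 0) (hL : L ^ 2 = 0) {x : V} (hx : L x ≠ 0)
    (hrange : LinearMap.range L ≤ span K {L x}) :
    HasStructureConstants L ω ![![0,0,0,0], ![1,0,0,0], ![0,0,0,0], ![0,0,0,0]] 0 ∨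
    HasStructureConstants L ω ![![0,0,0,0], ![1,0,0,0], ![0,0,0,0], ![0,0,0,0]]
      ![![0,0,0,0], ![0,0,1,0], ![0,-1,0,0], ![0,0,0,0]] ∨
    HasStructureConstants L ω ![![0,0,0,0], ![1,0,0,0], ![0,0,0,0], ![0,0,0,0]]
      ![![0,0,0,0], ![0,0,0,0], ![0,0,0,1], ![0,0,-1,0]] := by
  by_cases hker : ∀ y z, L y = 0 → L z = 0 → ω y z = 0
  · by_cases hxker : ∀ p, L p = 0 → ω x p = 0
    · left
      have hω0 : ω = 0 := by
        have hxω : ∀ z, ω x z = 0 := fun z => by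
          obtain ⟨c, hc⟩ := mem_span_singleton.1 (hrange ⟨z, rfl⟩)
          simpa [hω.self_eq_zero] using hxker (z - c • x) (by simp [hc])
        have hωx : ∀ z, ω z x = 0 := fun _ => hω.isRefl.eq_zero (hxω _)
        ext y z
        obtain ⟨c, hc⟩ := mem_span_singleton.1 (hrange ⟨y, rfl⟩)
        obtain ⟨d, hd⟩ := mem_span_singleton.1 (hrange ⟨z, rfl⟩)
        simpa [hxω, hωx] using
          hker (y - c • x) (z - d • x) (by simp [hc]) (by simp [hd])
      exact hω0 ▸ hasStructureConstants_of_range_le_of_eq_zero hV hL hx hrange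
    · right; left
      push Not at hxker
      obtain ⟨p, hp, hxp⟩ := hxker
      exact hasStructureConstants_of_ker_isotropic hV hω hωL hL hx hrange hker
        (p := (ω x p)⁻¹ • p) (by simp [hp]) (by simp [hxp])
  · right; right
    push Not at hker
    obtain ⟨p, q, hp, hq, hpq⟩ := hker
    exact hasStructureConstants_of_ker_apply_eq_one hV hω hωL hL hx hp
      (q := (ω p q)⁻¹ • q) (by simp [hq]) (by simp [hpq])

lemma hasStructureConstants_zero_left_of_apply_eq_one (hV : finrank K V = 4) (hω : ω.IsAlt)
    {p q u v : V} (hpq : ω p q = 1) (huv : ω u v = 1) (hpu : ω p u = 0) (hqu : ω q u = 0)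
    (hpv : ω p v = 0) (hqv : ω q v = 0) :
    HasStructureConstants 0 ω 0 ![![0,1,0,0], ![-1,0,0,0], ![0,0,0,1], ![0,0,-1,0]] := by
  have hqp : ω q p = -1 := by rw [← hω.neg_eq, hpq]
  have hvu : ω v u = -1 := by rw [← hω.neg_eq, huv]
  have hup : ω u p = 0 := hω.isRefl.eq_zero hpu
  have huq : ω u q = 0 := hω.isRefl.eq_zero hqu
  have hvp : ω v p = 0 := hω.isRefl.eq_zero hpv
  have hvq : ω v q = 0 := hω.isRefl.eq_zero hqv
  have hli : LinearIndependent K ![p, q, u, v] := by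
    refine Fintype.linearIndependent_iff.2 fun c hc => ?_
    have hc : c 0 • p + c 1 • q + c 2 • u + c 3 • v = 0 := by
      simpa [Fin.sum_univ_four] using hc
    have h0 : c 0 = 0 := by simpa [hω.self_eq_zero, hqp, hqu, hqv] using congr(ω q $hc)
    have h1 : c 1 = 0 := by simpa [hω.self_eq_zero, hpq, hpu, hpv] using congr(ω p $hc)
    have h2 : c 2 = 0 := by simpa [hω.self_eq_zero, hvp, hvq, hvu] using congr(ω v $hc)
    have h3 : c 3 = 0 := by simpa [hω.self_eq_zero, hup, huq, huv] using congr(ω u $hc)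
    simp [Fin.forall_fin_succ, h0, h1, h2, h3]
  refine .of_linearIndependent hli (by simpa using hV) (by simp) ?_
  simp [Fin.forall_fin_succ, hω.self_eq_zero, hpq, hqp, huv, hvu, hpu, hup, hqu, huq, hpv, hvp,
    hqv, hvq]

lemma hasStructureConstants_zero_left (hV : finrank K V = 4) (hω : ω.IsAlt) :
    HasStructureConstants 0 ω (0 : Fin 4 → Fin 4 → K) 0 ∨
    HasStructureConstants 0 ω 0 ![![0,1,0,0], ![-1,0,0,0], ![0,0,0,0], ![0,0,0,0]] ∨
    HasStructureConstants 0 ω 0 ![![0,1,0,0], ![-1,0,0,0], ![0,0,0,1], ![0,0,-1,0]] := by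
  by_cases hω0 : ω = 0
  · left
    have : FiniteDimensional K V := .of_finrank_pos (by omega)
    exact ⟨finBasisOfFinrankEq K V hV, by simp, by simp [hω0]⟩
  right
  obtain ⟨p, q, hpq⟩ : ∃ p q, ω p q = 1 := by
    obtain ⟨p, hp⟩ := DFunLike.ne_iff.1 hω0
    obtain ⟨q, hq : ω p q ≠ 0⟩ := DFunLike.ne_iff.1 hp
    exact ⟨p, (ω p q)⁻¹ • q, by simp [hq]⟩
  have hqp : ω q p = -1 := by rw [← hω.neg_eq, hpq]
  have hcod := codisjoint_span_pair_ker_inf_ker hω hpq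
  obtain ⟨u, ⟨hpu : ω p u = 0, hqu : ω q u = 0⟩, hli⟩ := exists_mem_linearIndependent_snoc
    (linearIndependent_pair_of_apply_eq_one hω hpq) (by omega)
    (hcod.mono_left (span_mono (by simp [Set.insert_subset_iff])))
  obtain ⟨v, ⟨hpv : ω p v = 0, hqv : ω q v = 0⟩, hli⟩ := exists_mem_linearIndependent_snoc hli
    (by omega) (hcod.mono_left (span_mono (by simp [Set.insert_subset_iff])))
  by_cases huv : ω u v = 0
  · left
    have hrefl : ∀ {y z}, ω y z = 0 → ω z y = 0 := hω.isRefl.eq_zero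
    refine .of_linearIndependent hli (by simpa using hV) (by simp) ?_
    simp [Fin.forall_fin_succ, hω.self_eq_zero, hpq, hqp, huv, hrefl huv, hpu, hrefl hpu, hqu,
      hrefl hqu, hpv, hrefl hpv, hqv, hrefl hqv]
  · right
    exact hasStructureConstants_zero_left_of_apply_eq_one hV hω hpq (v := (ω u v)⁻¹ • v)
      (by simp [huv]) hpu hqu (by simp [hpv]) (by simp [hqv])

end NormalForms

lemma Iso.symm {m n : ℕ} {μ ν : Tensor m n} (h : Iso μ ν) : Iso ν μ := by
  obtain ⟨T, S, h⟩ := h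
  refine ⟨T.symm, S.symm, fun x y => ?_⟩
  have := h (T.symm x.1, S.symm x.2) (T.symm y.1, S.symm y.2)
  simp only [LinearEquiv.apply_symm_apply] at this
  simp [← this]

lemma Iso.trans {m n : ℕ} {μ ν ξ : Tensor m n} (h : Iso μ ν) (h' : Iso ν ξ) : Iso μ ξ := by
  obtain ⟨T, S, h⟩ := h
  obtain ⟨T', S', h'⟩ := h'
  refine ⟨T.trans T', S.trans S', fun x y => ?_⟩
  have := h' (T x.1, S x.2) (T y.1, S y.2)
  simpa [← h] using this

section Powers

variable {m n : ℕ} {μ : Tensor m n}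

lemma mulSub_mono {A A' B B' : Submodule ℂ (GV m n)} (hA : A ≤ A') (hB : B ≤ B') :
    mulSub μ A B ≤ mulSub μ A' B' :=
  span_mono fun _ ⟨a, ha, b, hb, hab⟩ => ⟨a, hA ha, b, hB hb, hab⟩

lemma powT_one : powT μ 1 = ⊤ := by
  rw [powT]

lemma powT_add_two (k : ℕ) :
    powT μ (k + 2) = ⨆ i : Fin (k + 1), mulSub μ (powT μ (i + 1)) (powT μ (k + 1 - i)) := by
  rw [powT]

lemma mulSub_powT_le_powT {i j k : ℕ} (h : i + j = k) :
    mulSub μ (powT μ (i + 1)) (powT μ (j + 1)) ≤ powT μ (k + 2) := by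
  rw [powT_add_two]
  refine le_iSup_of_le (⟨i, by omega⟩ : Fin (k + 1)) ?_
  rw [show k + 1 - i = j + 1 by omega]

lemma powT_succ_le (k : ℕ) : powT μ (k + 2) ≤ powT μ (k + 1) := by
  induction k using Nat.strong_induction_on with
  | _ k ih =>
    rcases k with _ | k
    · simp [powT_one]
    rw [powT_add_two]
    refine iSup_le fun i => ?_
    obtain ⟨j, hij⟩ := Nat.exists_eq_add_of_le (Nat.lt_succ_iff.1 i.isLt)
    rw [show k + 1 + 1 - (i : ℕ) = j + 1 by omega]
    rcases j with _ | j
    · have hi : (i : ℕ) = k + 1 := by omega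
      rw [hi]
      exact (mulSub_mono (ih k (by omega)) le_rfl).trans (mulSub_powT_le_powT (add_zero k))
    · exact (mulSub_mono le_rfl (ih j (by omega))).trans (mulSub_powT_le_powT (by omega))

lemma mulOf_mem_powT (u : GV m n) {v : GV m n} {k : ℕ} (hv : v ∈ powT μ (k + 1)) :
    mulOf μ u v ∈ powT μ (k + 2) :=
  mulSub_powT_le_powT (zero_add k) (subset_span ⟨u, by simp [powT_one], v, hv, rfl⟩)

lemma IsNilpotentT.eq_zero_of_fixed (h : IsNilpotentT μ) {A : GV m n → GV m n}
    (hA : ∀ k, ∀ v ∈ powT μ (k + 1), A v ∈ powT μ (k + 2)) {v : GV m n} (hv : A v = v) :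
    v = 0 := by
  have hmem : ∀ k, v ∈ powT μ (k + 1) := fun k => by
    induction k with
    | zero => simp [powT_one]
    | succ k ih => exact hv ▸ hA k v ih
  obtain ⟨k, hk, hbot⟩ := h
  simpa [Nat.sub_add_cancel hk, hbot] using hmem (k - 1)

end Powers

section OneDimensionalEvenPart

variable {n : ℕ}

/-- The operator `f ↦ e₁ f` on the odd part of a superalgebra of type `(1,n)`. -/
def evenMul (μ : Tensor 1 n) : End ℂ (Fin n → ℂ) :=
  Matrix.toLin' (Matrix.of fun k j => μ.2.1 0 j k)

/-- The bilinear form `ω` with `f g = ω(f, g) e₁` on the odd part of a superalgebra of type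
`(1,n)`. -/
def oddForm (μ : Tensor 1 n) : BilinForm ℂ (Fin n → ℂ) :=
  Matrix.toBilin' (Matrix.of fun i j => μ.2.2 i j 0)

lemma mulOf_eq (μ : Tensor 1 n) (x y : GV 1 n) :
    mulOf μ x y = (fun _ => x.1 0 * y.1 0 * μ.1 0 0 0 + oddForm μ x.2 y.2,
      x.1 0 • evenMul μ y.2 + y.1 0 • evenMul μ x.2) := by
  refine Prod.ext ?_ ?_
  · ext k
    simp [mulOf, oddForm, Matrix.toBilin'_apply, Subsingleton.elim k 0, mul_right_comm]
  · ext k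
    simp [mulOf, evenMul, Matrix.mulVec, dotProduct, Finset.mul_sum, mul_assoc, mul_comm,
      mul_left_comm]

lemma iso_iff {μ ν : Tensor 1 n} :
    Iso μ ν ↔ ∃ t : ℂ, t ≠ 0 ∧ ∃ S : (Fin n → ℂ) ≃ₗ[ℂ] (Fin n → ℂ),
      μ.1 0 0 0 = t * ν.1 0 0 0 ∧ (∀ x, S (evenMul μ x) = t • evenMul ν (S x)) ∧
      ∀ x y, t * oddForm μ x y = oddForm ν (S x) (S y) := by
  constructor
  · rintro ⟨T, S, h⟩
    simp only [mulOf_eq, Prod.mk.injEq] at h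
    set t := T 1 0 with ht
    have hT : ∀ a : Fin 1 → ℂ, T a = t • a := fun a => by
      have ha : a = a 0 • 1 := by ext i; simp [Subsingleton.elim i 0]
      ext i
      rw [ha, map_smul]
      simp [Subsingleton.elim i 0, ht, mul_comm]
    have ht0 : t ≠ 0 := fun h0 => by
      have : (1 : Fin 1 → ℂ) = 0 := T.injective (by simp [hT, h0])
      simpa using congr_fun this 0
    refine ⟨t, ht0, S, ?_, fun x => ?_, fun x y => ?_⟩
    · simpa [hT, ht0, mul_assoc] using congr_fun (h (1, 0) (1, 0)).1 0
    · simpa [hT] using (h (1, 0) (0, x)).2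
    · simpa [hT] using congr_fun (h (0, x) (0, y)).1 0
  · rintro ⟨t, ht, S, hc, hL, hω⟩
    refine ⟨LinearEquiv.smulOfNeZero ℂ _ t ht, S, fun x y => ?_⟩
    rw [mulOf_eq, mulOf_eq]
    refine Prod.ext ?_ ?_
    · ext
      simp [hc, ← hω]
      ring
    · simp [hL, smul_smul, mul_comm]

variable {μ : Tensor 1 n}

lemma IsNilpotentT.even_mul_even_eq_zero (h : IsNilpotentT μ) : μ.1 0 0 0 = 0 := by
  by_contra hc
  have hfix : (μ.1 0 0 0)⁻¹ • mulOf μ (1, 0) (1, 0) = (1, 0) :=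
    Prod.ext (by ext; simp [mulOf_eq, hc]) (by simp [mulOf_eq])
  have := h.eq_zero_of_fixed (A := fun v => (μ.1 0 0 0)⁻¹ • mulOf μ (1, 0) v)
    (fun k v hv => smul_mem _ _ (mulOf_mem_powT _ hv)) hfix
  simp at this

lemma IsNilpotentT.oddForm_evenMul_eq_zero (h : IsNilpotentT μ) (f g : Fin n → ℂ) :
    oddForm μ f (evenMul μ g) = 0 := by
  by_contra hc
  have hfix : (oddForm μ f (evenMul μ g))⁻¹ • mulOf μ (0, f) (mulOf μ (0, g) (1, 0)) = (1, 0) :=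
    Prod.ext (by ext; simp [mulOf_eq, hc]) (by simp [mulOf_eq])
  have := h.eq_zero_of_fixed
    (A := fun v => (oddForm μ f (evenMul μ g))⁻¹ • mulOf μ (0, f) (mulOf μ (0, g) v))
    (fun k v hv => smul_mem _ _ (powT_succ_le _ (mulOf_mem_powT _ (mulOf_mem_powT _ hv)))) hfix
  simp at this

lemma IsJordanSuper.isAlt_oddForm (h : IsJordanSuper μ) : (oddForm μ).IsAlt := fun x => by
  have := h.1 1 1 (0, x) (0, x) (.inr ⟨rfl, rfl⟩) (.inr ⟨rfl, rfl⟩)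
  have : oddForm μ x x = -oddForm μ x x := by
    simpa [mulOf_eq, sgn] using congr_fun congr(($this).1) 0
  exact self_eq_neg.1 this

lemma IsJordanSuper.evenMul_pow_three (h : IsJordanSuper μ) (hc : μ.1 0 0 0 = 0) :
    evenMul μ ^ 3 = 0 := by
  refine LinearMap.ext fun f => ?_
  have := h.2 0 1 0 0 (1, 0) (0, f) (1, 0) (1, 0) (.inl ⟨rfl, rfl⟩) (.inr ⟨rfl, rfl⟩)
    (.inl ⟨rfl, rfl⟩) (.inl ⟨rfl, rfl⟩)
  have : -evenMul μ (evenMul μ (evenMul μ f)) - evenMul μ (evenMul μ (evenMul μ f)) = 0 := by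
    simpa [superJ, mulOf_eq, sgn, hc] using congr(($this).2)
  simpa [pow_succ] using self_eq_neg.1 (sub_eq_zero.1 this).symm

lemma IsJordanSuper.oddForm_smul_evenMul_sq (h : IsJordanSuper μ)
    (hω : ∀ x y, oddForm μ x (evenMul μ y) = 0) (x y z : Fin n → ℂ) :
    oddForm μ x y • evenMul μ (evenMul μ z) = oddForm μ x z • evenMul μ (evenMul μ y) := by
  have := h.2 1 0 1 1 (0, x) (1, 0) (0, y) (0, z) (.inr ⟨rfl, rfl⟩) (.inl ⟨rfl, rfl⟩)
    (.inr ⟨rfl, rfl⟩) (.inr ⟨rfl, rfl⟩)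
  have : oddForm μ y z • evenMul μ (evenMul μ x) + oddForm μ x y • evenMul μ (evenMul μ z) +
      -(oddForm μ x z • evenMul μ (evenMul μ y)) - oddForm μ y z • evenMul μ (evenMul μ x) = 0 := by
    simpa [superJ, mulOf_eq, sgn, hω] using congr(($this).2)
  linear_combination (norm := module) this

end OneDimensionalEvenPart

lemma Iso.exists_orderIso {n : ℕ} {μ ν : Tensor 1 n} (h : Iso μ ν) :
    ∃ φ : Submodule ℂ (Fin n → ℂ) ≃o Submodule ℂ (Fin n → ℂ),
      φ (LinearMap.ker (evenMul μ)) = LinearMap.ker (evenMul ν) ∧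
      φ (LinearMap.range (evenMul μ)) = LinearMap.range (evenMul ν) ∧
      φ (LinearMap.ker (oddForm μ)) = LinearMap.ker (oddForm ν) := by
  obtain ⟨t, ht, S, -, hL, hω⟩ := iso_iff.1 h
  refine ⟨orderIsoMapComap S, ?_, ?_, ?_⟩
  · ext x
    have : S (evenMul μ (S.symm x)) = t • evenMul ν x := by simp [hL]
    rw [orderIsoMapComap_apply, mem_map_equiv, LinearMap.mem_ker, LinearMap.mem_ker,
      ← S.map_eq_zero_iff, this, smul_eq_zero_iff_right ht]
  · ext x
    simp only [orderIsoMapComap_apply, mem_map_equiv, LinearMap.mem_range]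
    constructor
    · rintro ⟨y, hy⟩
      exact ⟨t • S y, by rw [map_smul, ← hL, hy, S.apply_symm_apply]⟩
    · rintro ⟨y, rfl⟩
      refine ⟨t⁻¹ • S.symm y, S.injective ?_⟩
      simp [hL, ht]
  · ext x
    have : ∀ y, oddForm ν x (S y) = t * oddForm μ (S.symm x) y := by simp [hω]
    simp only [orderIsoMapComap_apply, mem_map_equiv, LinearMap.mem_ker, LinearMap.ext_iff,
      LinearMap.zero_apply]
    rw [S.surjective.forall (p := fun y => oddForm ν x y = 0)]
    simp only [this, mul_eq_zero_iff_left ht]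

lemma evenMul_T14 (R W : Fin 4 → Fin 4 → ℂ) (x : Fin 4 → ℂ) :
    evenMul (T14 R W) x = ∑ j, x j • R j := by
  ext k
  simp [evenMul, T14, Matrix.mulVec, dotProduct, mul_comm]

lemma oddForm_T14 (R W : Fin 4 → Fin 4 → ℂ) (x y : Fin 4 → ℂ) :
    oddForm (T14 R W) x y = ∑ i, ∑ j, x i * W i j * y j := by
  simp [oddForm, T14, Matrix.toBilin'_apply]

lemma HasStructureConstants.iso {μ : Tensor 1 4} {R W : Fin 4 → Fin 4 → ℂ}
    (h : HasStructureConstants (evenMul μ) (oddForm μ) R W) (hμ : μ.1 0 0 0 = 0) :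
    Iso μ (T14 R W) := by
  obtain ⟨b, hL, hω⟩ := h
  have hL' : b.equivFun.toLinearMap ∘ₗ evenMul μ = evenMul (T14 R W) ∘ₗ b.equivFun.toLinearMap :=
    b.ext fun j => by
      ext k
      simp [evenMul_T14, hL, Finsupp.single_apply, Finset.sum_apply, ite_apply]
  have hω' : oddForm μ = (oddForm (T14 R W)).comp b.equivFun.toLinearMap b.equivFun.toLinearMap :=
    LinearMap.BilinForm.ext_basis b fun i j => by
      simp [oddForm_T14, hω, Finsupp.single_apply]
  exact iso_iff.2 ⟨1, one_ne_zero, b.equivFun, by simp [hμ, T14],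
    fun x => by simpa using congr($hL' x), fun x y => by simpa using congr($hω' x y)⟩

section Table

variable (i : Fin 9)

lemma ker_evenMul_A14_eq_top_iff :
    LinearMap.ker (evenMul (A14 i)) = ⊤ ↔ i ∈ ({0, 1, 2} : Finset (Fin 9)) := by
  rw [LinearMap.ker_eq_top, evenMul, LinearEquiv.map_eq_zero_iff, ← Matrix.ext_iff]
  fin_cases i <;> simp [A14, T14, Fin.forall_fin_succ]

lemma range_evenMul_A14_le_ker_iff :
    LinearMap.range (evenMul (A14 i)) ≤ LinearMap.ker (evenMul (A14 i)) ↔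
      i ∈ ({6}ᶜ : Finset (Fin 9)) := by
  rw [LinearMap.range_le_ker_iff, evenMul, ← Matrix.toLin'_mul, LinearEquiv.map_eq_zero_iff,
    ← Matrix.ext_iff]
  fin_cases i <;> simp [A14, T14, Matrix.mul_apply, Fin.sum_univ_four, Fin.forall_fin_succ]

lemma ker_oddForm_A14_eq_top_iff :
    LinearMap.ker (oddForm (A14 i)) = ⊤ ↔ i ∈ ({0, 3, 6, 7} : Finset (Fin 9)) := by
  rw [LinearMap.ker_eq_top, oddForm, LinearEquiv.map_eq_zero_iff, ← Matrix.ext_iff]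
  fin_cases i <;> simp [A14, T14, Fin.forall_fin_succ]

lemma single_three_notMem_range_evenMul_A14 :
    Pi.single 3 1 ∉ LinearMap.range (evenMul (A14 i)) := by
  rintro ⟨x, hx⟩
  have := congr_fun hx 3
  fin_cases i <;> simp [A14, evenMul_T14, Fin.sum_univ_four] at this

lemma ker_evenMul_A14_le_range_iff :
    LinearMap.ker (evenMul (A14 i)) ≤ LinearMap.range (evenMul (A14 i)) ↔
      i ∈ ({7, 8} : Finset (Fin 9)) := by
  constructor
  · intro h
    have := mt (@h _) (single_three_notMem_range_evenMul_A14 i)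
    fin_cases i <;> simp [A14, evenMul_T14] at this ⊢
  · intro h x hx
    -- The preimage comes from `e₁ f₂ = f₁` and `e₁ f₄ = f₃`.
    refine ⟨![0, x 0, 0, x 2], ?_⟩
    ext k
    have hx : ∀ l, evenMul (A14 i) x l = 0 := fun l => by simp [LinearMap.mem_ker.1 hx]
    fin_cases i <;> fin_cases k <;>
      simp [A14, evenMul_T14, Fin.sum_univ_four, Fin.forall_fin_succ] at h hx ⊢ <;> grind

lemma ker_evenMul_inf_ker_oddForm_A14_le_range_iff :
    LinearMap.ker (evenMul (A14 i)) ⊓ LinearMap.ker (oddForm (A14 i)) ≤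
        LinearMap.range (evenMul (A14 i)) ↔
      i ∈ ({2, 5, 7, 8} : Finset (Fin 9)) := by
  constructor
  · intro h
    have := mt (@h _) (single_three_notMem_range_evenMul_A14 i)
    fin_cases i <;>
      simp [A14, evenMul_T14, oddForm_T14, Fin.sum_univ_four, LinearMap.ext_iff] at this ⊢
  · rintro h x ⟨hx, hωx⟩
    refine ⟨![0, x 0, 0, x 2], ?_⟩
    ext k
    have hx : ∀ l, evenMul (A14 i) x l = 0 := fun l => by simp [LinearMap.mem_ker.1 hx]
    have hωx : ∀ l, oddForm (A14 i) x (Pi.single l 1) = 0 := fun l => by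
      simp [LinearMap.mem_ker.1 hωx]
    fin_cases i <;> fin_cases k <;>
      simp [A14, evenMul_T14, oddForm_T14, Fin.sum_univ_four, Fin.forall_fin_succ] at h hx hωx ⊢ <;>
      grind

end Table

lemma eq_of_iso_A14 {i j : Fin 9} (h : Iso (A14 i) (A14 j)) : i = j := by
  obtain ⟨φ, hker, hrange, hrad⟩ := h.exists_orderIso
  have hker_top := ker_evenMul_A14_eq_top_iff j
  have hrange_ker := range_evenMul_A14_le_ker_iff j
  have hrad_top := ker_oddForm_A14_eq_top_iff j
  have hker_range := ker_evenMul_A14_le_range_iff j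
  have hann_range := ker_evenMul_inf_ker_oddForm_A14_le_range_iff j
  rw [← hker, map_eq_top_iff, ker_evenMul_A14_eq_top_iff] at hker_top
  rw [← hrange, ← hker, φ.le_iff_le, range_evenMul_A14_le_ker_iff] at hrange_ker
  rw [← hrad, map_eq_top_iff, ker_oddForm_A14_eq_top_iff] at hrad_top
  rw [← hrange, ← hker, φ.le_iff_le, ker_evenMul_A14_le_range_iff] at hker_range
  rw [← hker, ← hrad, ← hrange, ← φ.map_inf, φ.le_iff_le,
    ker_evenMul_inf_ker_oddForm_A14_le_range_iff] at hann_range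
  clear h φ hker hrange hrad
  decide +revert

lemma exists_iso_A14 {μ : Tensor 1 4} (hJ : IsJordanSuper μ) (hN : IsNilpotentT μ) :
    ∃ i, Iso μ (A14 i) := by
  have hc := hN.even_mul_even_eq_zero
  have hω := hJ.isAlt_oddForm
  have hωL := hN.oddForm_evenMul_eq_zero
  have hV : finrank ℂ (Fin 4 → ℂ) = 4 := by simp
  by_cases hL0 : evenMul μ = 0
  · rcases hL0 ▸ hasStructureConstants_zero_left hV hω with h | h | h
    exacts [⟨0, h.iso hc⟩, ⟨1, h.iso hc⟩, ⟨2, h.iso hc⟩]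
  by_cases hL2 : evenMul μ ^ 2 = 0
  · by_cases hrank : ∃ x y, LinearIndependent ℂ ![evenMul μ x, evenMul μ y]
    · obtain ⟨x, y, hxy⟩ := hrank
      rcases hasStructureConstants_of_linearIndependent_apply hV hω hωL hL2 hxy with h | h
      exacts [⟨7, h.iso hc⟩, ⟨8, h.iso hc⟩]
    · push Not at hrank
      obtain ⟨x, hx : evenMul μ x ≠ 0⟩ := DFunLike.ne_iff.1 hL0
      have hrange : LinearMap.range (evenMul μ) ≤ span ℂ {evenMul μ x} := by
        rintro _ ⟨y, rfl⟩
        simpa [LinearIndependent.pair_iff' hx, mem_span_singleton] using hrank x y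
      rcases hasStructureConstants_of_range_le hV hω hωL hL2 hx hrange with h | h | h
      exacts [⟨3, h.iso hc⟩, ⟨4, h.iso hc⟩, ⟨5, h.iso hc⟩]
  · obtain ⟨g, hg⟩ := DFunLike.ne_iff.1 hL2
    exact ⟨6, (hasStructureConstants_of_sq_ne_zero hV hω hωL (hJ.evenMul_pow_three hc)
      (hJ.oddForm_smul_evenMul_sq hωL) (g := g) (by simpa [pow_succ] using hg)).iso hc⟩

/-- every nilpotent Jordan superalgebra of type (1,4) is isomorphic to
exactly one of the nine listed superalgebras; in particular these are pairwise
non-isomorphic. -/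
theorem stmt1 :
    (∀ μ : Tensor 1 4, IsJordanSuper μ → IsNilpotentT μ → ∃! i : Fin 9, Iso μ (A14 i)) ∧
    (∀ i j : Fin 9, Iso (A14 i) (A14 j) → i = j) :=
  ⟨fun _ hJ hN =>
    let ⟨i, hi⟩ := exists_iso_A14 hJ hN
    ⟨i, hi, fun _ hj => eq_of_iso_A14 (hj.symm.trans hi)⟩,
    fun _ _ => eq_of_iso_A14⟩

end
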